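/- arXiv:1709.08150 — 2 statements merged into one kernel-verified Lean document; each statement's English description precedes it below -/
import Mathlib

section
/- Let K be a finite field with r = |K| elements. For all nonzero β, β' ∈ K, consider S := Σ P_{β·β', β·γ' + β'·γ}, the sum over all pairs of distinct nonzero elements γ, γ' ∈ K∖{0} with γ ≠ γ'. If β + β' = 0 then S = (r−2)·(J_r − I_r), and if β + β' ≠ 0 then S = 2·I_r + (r−3)·J_r, where I_r and J_r denote the identity and all-ones matrices with rows and columns indexed by K. -/
/-!
Fix `δ ≠ 0`; the theorem is the case `δ = β * β'`. Summing over all pairs of nonzero elements and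
then removing the diagonal leaves only sums over one variable. If `c ≠ 0`, then `γ ↦ c * γ + d`
permutes `K`, so the matrices `P_{δ, c * γ + d}` sum to `J`, and to `J - P_{δ, d}` once the term
`γ = 0` is removed. Applying this twice, together with `P_{δ, 0} = I`, evaluates the sum over all
pairs as `(r - 2) J + I`. The diagonal contributes the matrices `P_{δ, (β + β') * γ}`, which sum to
`(r - 1) I` or to `J - I` according to whether `β + β'` vanishes.
-/

open Matrix BigOperators

noncomputable section

/-- The all-ones matrix. -/
def allOnes (n : Type*) : Matrix n n ℝ := Matrix.of fun _ _ => 1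

/-- The permutation matrix `P_{β,γ}` with `(a,b)`-entry `1` iff `β·(−a+b) = γ`. -/
def permP {K : Type*} [Field K] [DecidableEq K] (β γ : K) : Matrix K K ℝ :=
  Matrix.of fun a b => if β * (-a + b) = γ then 1 else 0

theorem sum_offDiag_eq_sub {α M : Type*} [AddCommGroup M] (s : Finset α) (f : α × α → M) :
    ∑ p ∈ s.offDiag, f p = ∑ x ∈ s, ∑ y ∈ s, f (x, y) - ∑ x ∈ s, f (x, x) := by
  classical
  rw [eq_sub_iff_add_eq', ← Finset.sum_diag, ← Finset.sum_union s.disjoint_diag_offDiag,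
    s.diag_union_offDiag, Finset.sum_product]

theorem cast_card_compl_singleton {α R : Type*} [Fintype α] [DecidableEq α] [AddGroupWithOne R]
    (a : α) : (({a}ᶜ : Finset α).card : R) = Fintype.card α - 1 := by
  rw [Finset.card_compl, Finset.card_singleton, Nat.cast_pred (Fintype.card_pos_iff.2 ⟨a⟩)]

section PermP

variable {K : Type*} [Field K] [DecidableEq K]

theorem permP_zero_right {β : K} (hβ : β ≠ 0) : permP β 0 = 1 := by
  ext a b
  simp [permP, Matrix.one_apply, hβ, neg_add_eq_zero]

variable [Fintype K]

theorem sum_permP (β : K) : ∑ γ, permP β γ = allOnes K := by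
  ext a b
  simp [permP, allOnes, Matrix.sum_apply]

theorem sum_permP_mul_add {c : K} (hc : c ≠ 0) (β d : K) :
    ∑ γ, permP β (c * γ + d) = allOnes K :=
  calc ∑ γ, permP β (c * γ + d)
      = ∑ γ, permP β γ := ((Equiv.mulLeft₀ c hc).trans (Equiv.addRight d)).sum_comp (permP β)
    _ = allOnes K := sum_permP β

theorem sum_compl_zero_permP_mul_add {c : K} (hc : c ≠ 0) (β d : K) :
    ∑ γ ∈ {0}ᶜ, permP β (c * γ + d) = allOnes K - permP β d := by
  rw [eq_sub_iff_add_eq', ← sum_permP_mul_add hc β d,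
    Fintype.sum_eq_add_sum_compl (0 : K), mul_zero, zero_add]

theorem sum_compl_zero_permP_mul {β c : K} (hβ : β ≠ 0) (hc : c ≠ 0) :
    ∑ γ ∈ {0}ᶜ, permP β (c * γ) = allOnes K - 1 := by
  simpa only [add_zero, permP_zero_right hβ] using sum_compl_zero_permP_mul_add hc β 0

theorem sum_offDiag_permP {δ β β' : K} (hδ : δ ≠ 0) (hβ : β ≠ 0) (hβ' : β' ≠ 0) :
    ∑ p ∈ ({0}ᶜ : Finset K).offDiag, permP δ (β * p.2 + β' * p.1) =
      ((Fintype.card K : ℝ) - 2) • allOnes K + 1 - ∑ γ ∈ {0}ᶜ, permP δ ((β + β') * γ) := by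
  have sum_prod : ∑ x ∈ ({0}ᶜ : Finset K), ∑ y ∈ ({0}ᶜ : Finset K), permP δ (β * y + β' * x) =
      ((Fintype.card K : ℝ) - 2) • allOnes K + 1 := by
    simp only [sum_compl_zero_permP_mul_add hβ, Finset.sum_sub_distrib, Finset.sum_const,
      sum_compl_zero_permP_mul hδ hβ', ← Nat.cast_smul_eq_nsmul ℝ, cast_card_compl_singleton]
    module
  simp only [sum_offDiag_eq_sub, sum_prod, add_mul]

end PermP

theorem permP_sum_distinct_general (K : Type*) [Field K] [Fintype K] [DecidableEq K]
    (δ β β' : K) (hδ : δ ≠ 0) (hβ : β ≠ 0) (hβ' : β' ≠ 0) :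
    (β + β' = 0 →
      (∑ p ∈ Finset.univ.filter (fun p : K × K => p.1 ≠ 0 ∧ p.2 ≠ 0 ∧ p.1 ≠ p.2),
          permP δ (β * p.2 + β' * p.1)) =
        ((Fintype.card K : ℝ) - 2) • (allOnes K - 1)) ∧
    (β + β' ≠ 0 →
      (∑ p ∈ Finset.univ.filter (fun p : K × K => p.1 ≠ 0 ∧ p.2 ≠ 0 ∧ p.1 ≠ p.2),
          permP δ (β * p.2 + β' * p.1)) =
        (2 : ℝ) • (1 : Matrix K K ℝ) + ((Fintype.card K : ℝ) - 3) • allOnes K) := by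
  have filter_eq_offDiag : Finset.univ.filter (fun p : K × K => p.1 ≠ 0 ∧ p.2 ≠ 0 ∧ p.1 ≠ p.2) =
      ({0}ᶜ : Finset K).offDiag := by
    ext p
    simp
  rw [filter_eq_offDiag, sum_offDiag_permP hδ hβ hβ']
  refine ⟨fun hsum => ?_, fun hsum => ?_⟩
  · simp only [hsum, zero_mul, permP_zero_right hδ, Finset.sum_const, ← Nat.cast_smul_eq_nsmul ℝ,
      cast_card_compl_singleton]
    module
  · rw [sum_compl_zero_permP_mul hδ hsum]
    module

/-- For nonzero `β, β'`, the sum `S = Σ P_{β·β', β·γ' + β'·γ}` over pairs of distinct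
nonzero `γ, γ'` equals `(r−2)(J_r − I_r)` if `β + β' = 0` and `2·I_r + (r−3)·J_r`
otherwise. -/
theorem permP_sum_distinct (K : Type*) [Field K] [Fintype K] [DecidableEq K]
    (β β' : K) (hβ : β ≠ 0) (hβ' : β' ≠ 0) :
    (β + β' = 0 →
      (∑ p ∈ Finset.univ.filter (fun p : K × K => p.1 ≠ 0 ∧ p.2 ≠ 0 ∧ p.1 ≠ p.2),
          permP (β * β') (β * p.2 + β' * p.1)) =
        ((Fintype.card K : ℝ) - 2) • (allOnes K - 1)) ∧
    (β + β' ≠ 0 →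
      (∑ p ∈ Finset.univ.filter (fun p : K × K => p.1 ≠ 0 ∧ p.2 ≠ 0 ∧ p.1 ≠ p.2),
          permP (β * β') (β * p.2 + β' * p.1)) =
        (2 : ℝ) • (1 : Matrix K K ℝ) + ((Fintype.card K : ℝ) - 3) • allOnes K) :=
  permP_sum_distinct_general K (β * β') β β' (mul_ne_zero hβ hβ') hβ hβ'
end
end

section
/- In the twin prime power construction, for every nonzero β ∈ K one has N_β · N_{−β} = q²·I_{(q+2)q²} + q·J_{(q+2)q²}; in particular each N_β is the incidence matrix of a symmetric 2-design with parameters (q²(q+2), q(q+1), q). -/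
open Matrix Kronecker BigOperators

noncomputable section

/-- The auxiliary matrices `C_a` for `a ∈ F ∪ {y}` (formally `Option F`, with `none`
playing the role of the extra symbol `y`, so that `C_y = I_q ⊗ J_q`). -/
def auxC {F : Type*} [Field F] [Fintype F] [DecidableEq F] :
    Option F → Matrix (F × F) (F × F) ℝ
  | some α => Matrix.of fun p r => if r.2 - p.2 = α * (r.1 - p.1) then 1 else 0
  | none => Matrix.of fun p r => if p.1 = r.1 then 1 else 0

/-- The matrix `N_β = Σ_{γ∈K∖{0}} P_{β,γ} ⊗ C_{ψ(γ)}` of the twin prime power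
construction, where `ψ : K∖{0} → F ∪ {y}` is a fixed bijection. -/
def NN {F K : Type*} [Field F] [Fintype F] [DecidableEq F]
    [Field K] [Fintype K] [DecidableEq K]
    (ψ : {x : K // x ≠ 0} ≃ Option F) (β : K) :
    Matrix (K × (F × F)) (K × (F × F)) ℝ :=
  ∑ γ : {x : K // x ≠ 0}, permP β (γ : K) ⊗ₖ auxC (ψ γ)

/-!
The index `a ∈ F ∪ {y}` names a parallel class of lines in the affine plane `F × F`, and the entry
of `C_a` at `(p, r)` is `1` iff `p` and `r` lie on a common line of that class. The lines through a
point in two different classes serve as its coordinates, and two distinct points are joined by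
exactly one line. Hence `C_a² = q C_a`, `C_a C_b = J` for `a ≠ b`, and `∑ C_a = q I + J`.

The `(k, l)` block of `N_β` depends only on `β (l - k)`: it is `0` for `k = l`, and for fixed `k`
the other blocks run through all the `C_a`. Hence a diagonal block of `N_β N_{-β}` is
`∑ C_a² = q (q I + J)`, and an off-diagonal block is a sum of `|K| - 2 = q` products `C_a C_b` with
`a ≠ b`, that is `q J`.
-/

section KerMatrix

variable {P A B R : Type*} [DecidableEq A]

/-- The `0`-`1` matrix of the kernel of `f`, the equivalence relation `f p = f r`. For `f` assigning
to each point its line in a parallel class, it is the collinearity matrix of that class. -/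
def kerMatrix [Zero R] [One R] (f : P → A) : Matrix P P R :=
  Matrix.of fun p r => if f p = f r then 1 else 0

theorem transpose_kerMatrix [Zero R] [One R] (f : P → A) :
    (kerMatrix f : Matrix P P R)ᵀ = kerMatrix f := by
  ext p r
  simp only [kerMatrix, transpose_apply, of_apply, eq_comm]

theorem kerMatrix_apply_eq_zero_or_one [Zero R] [One R] (f : P → A) (p r : P) :
    (kerMatrix f : Matrix P P R) p r = 0 ∨ (kerMatrix f : Matrix P P R) p r = 1 :=
  (ite_eq_or_eq _ _ _).symm

theorem sum_kerMatrix [DecidableEq P] [AddCommMonoidWithOne R] {ι : Type*} [Fintype ι]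
    {f : ι → P → A} {n : ℕ} (hn : Fintype.card ι = n + 1)
    (hf : ∀ p r, p ≠ r → ∃! i, f i p = f i r) :
    ∑ i, kerMatrix (f i) = n • (1 : Matrix P P R) + Matrix.of fun _ _ => 1 := by
  ext p r
  simp only [Matrix.sum_apply, kerMatrix, of_apply, Matrix.add_apply, Matrix.smul_apply]
  obtain rfl | hpr := eq_or_ne p r
  · simp [hn]
  · obtain ⟨i, hi, hunique⟩ := hf p r hpr
    rw [Fintype.sum_eq_single i fun j hj => if_neg (mt (hunique j) hj)]
    simp [hi, hpr]

variable [Fintype P] [NonAssocSemiring R] {f : P → A}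

theorem card_fiber_of_bijective_prod [Fintype B] {g : P → B}
    (h : Function.Bijective fun s => (f s, g s)) (c : A) :
    ({s | f s = c} : Finset P).card = Fintype.card B := by
  refine Finset.card_nbij g (fun _ _ => Finset.mem_univ _) ?_ ?_
  · intro s hs t ht hst
    simp only [Finset.mem_coe, Finset.mem_filter, Finset.mem_univ, true_and] at hs ht
    exact h.injective (Prod.ext (hs.trans ht.symm) hst)
  · intro b _
    obtain ⟨s, hs⟩ := h.surjective (c, b)
    obtain ⟨hfs, hgs⟩ := Prod.mk.inj hs
    exact ⟨s, by simp [hfs], hgs⟩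

theorem kerMatrix_mul_self_of_bijective_prod [Fintype B] {g : P → B}
    (h : Function.Bijective fun s => (f s, g s)) :
    (kerMatrix f * kerMatrix f : Matrix P P R) = Fintype.card B • kerMatrix f := by
  ext p r
  simp only [mul_apply, kerMatrix, of_apply, Matrix.smul_apply]
  have hterm (s : P) : (if f p = f s then 1 else 0) * (if f s = f r then 1 else 0) =
      if f s = f r then (if f p = f r then 1 else 0 : R) else 0 := by
    by_cases hs : f s = f r <;> simp [hs]
  simp only [hterm]
  rw [← Finset.sum_filter, Finset.sum_const, card_fiber_of_bijective_prod h]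

theorem kerMatrix_mul_kerMatrix_of_bijective_prod [DecidableEq B] {g : P → B}
    (h : Function.Bijective fun s => (f s, g s)) :
    (kerMatrix f * kerMatrix g : Matrix P P R) = Matrix.of fun _ _ => 1 := by
  ext p r
  obtain ⟨s, hs⟩ := h.surjective (f p, g r)
  obtain ⟨hfs, hgs⟩ := Prod.mk.inj hs
  simp only [mul_apply, kerMatrix, of_apply]
  rw [Fintype.sum_eq_single s]
  · simp [hfs, hgs]
  · intro t ht
    have hne : ¬(f p = f t ∧ g t = g r) := fun ⟨hft, hgt⟩ =>
      ht (h.injective (Prod.ext (hft.symm.trans hfs.symm) (hgt.trans hgs.symm)))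
    rw [ite_zero_mul_ite_zero, if_neg hne]

end KerMatrix

section AffinePlane

variable {F : Type*} [Field F]

/-- The label of the line through a point in the parallel class `a` of the affine plane `F × F`:
the `y`-intercept for the lines of slope `α`, the abscissa for the vertical lines (`none`). -/
def intercept : Option F → F × F → F
  | some α, p => p.2 - α * p.1
  | none, p => p.1

theorem existsUnique_intercept_eq {p r : F × F} (h : p ≠ r) :
    ∃! a, intercept a p = intercept a r := by
  by_cases hx : p.1 = r.1
  · refine ⟨none, hx, ?_⟩
    rintro (_ | α) hα
    · rfl
    · simp only [intercept, hx, sub_left_inj] at hα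
      exact absurd (Prod.ext hx hα) h
  · have hx' : p.1 - r.1 ≠ 0 := sub_ne_zero.mpr hx
    have hslope (α : F) :
        intercept (some α) p = intercept (some α) r ↔ α = (p.2 - r.2) / (p.1 - r.1) := by
      rw [eq_div_iff hx']
      simp only [intercept]
      constructor <;> intro hα <;> linear_combination -hα
    refine ⟨some ((p.2 - r.2) / (p.1 - r.1)), (hslope _).mpr rfl, ?_⟩
    rintro (_ | α) hα
    · exact absurd hα hx
    · rw [(hslope α).mp hα]

theorem bijective_intercept_prod [Finite F] {a b : Option F} (hab : a ≠ b) :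
    Function.Bijective fun p => (intercept a p, intercept b p) := by
  refine Finite.injective_iff_bijective.mp fun p r h => ?_
  obtain ⟨ha, hb⟩ := Prod.mk.inj h
  by_contra hpr
  exact hab ((existsUnique_intercept_eq hpr).unique ha hb)

variable [Fintype F] [DecidableEq F]

theorem auxC_eq_kerMatrix (a : Option F) : auxC a = kerMatrix (intercept a) := by
  cases a with
  | none => rfl
  | some α =>
    ext p r
    refine if_congr ?_ rfl rfl
    simp only [intercept]
    constructor <;> intro h <;> linear_combination -h

theorem transpose_auxC (a : Option F) : (auxC a)ᵀ = auxC a := by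
  rw [auxC_eq_kerMatrix, transpose_kerMatrix]

theorem auxC_mul_self (a : Option F) : auxC a * auxC a = Fintype.card F • auxC a := by
  obtain ⟨b, hba⟩ := exists_ne a
  rw [auxC_eq_kerMatrix, kerMatrix_mul_self_of_bijective_prod (bijective_intercept_prod hba.symm)]

theorem auxC_mul_auxC_of_ne {a b : Option F} (hab : a ≠ b) :
    auxC a * auxC b = allOnes (F × F) := by
  rw [auxC_eq_kerMatrix, auxC_eq_kerMatrix,
    kerMatrix_mul_kerMatrix_of_bijective_prod (bijective_intercept_prod hab), allOnes]

theorem sum_auxC : ∑ a : Option F, auxC a = Fintype.card F • 1 + allOnes (F × F) := by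
  simp only [auxC_eq_kerMatrix]
  exact sum_kerMatrix Fintype.card_option fun _ _ => existsUnique_intercept_eq

end AffinePlane

section Circulant

variable {G S : Type*} [AddGroup G] [Fintype G] [Semiring S]

theorem sum_sub_mul_sub_of_ne {D : G → S} {J : S} (hzero : D 0 = 0)
    (hmul : ∀ x y, x ≠ 0 → y ≠ 0 → x ≠ y → D x * D y = J) {i k : G} (hik : i ≠ k) :
    ∑ j, D (i - j) * D (k - j) = (Fintype.card G - 2) • J := by
  classical
  have hterm (j : G) : D (i - j) * D (k - j) = if j ∈ ({i, k} : Finset G)ᶜ then J else 0 := by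
    obtain rfl | hij := eq_or_ne i j
    · simp [hzero]
    obtain rfl | hkj := eq_or_ne k j
    · simp [hzero]
    rw [hmul _ _ (sub_ne_zero.mpr hij) (sub_ne_zero.mpr hkj) (mt sub_left_inj.mp hik)]
    simp [hij.symm, hkj.symm]
  simp only [hterm]
  rw [Finset.sum_ite_mem, Finset.univ_inter, Finset.sum_const, Finset.card_compl,
    Finset.card_pair hik]

theorem circulant_mul_circulant_neg [DecidableEq G] {D : G → S} {J : S} {n : ℕ}
    (hcard : Fintype.card G = n + 2) (hzero : D 0 = 0) (hsq : ∀ x, D x * D x = n • D x)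
    (hmul : ∀ x y, x ≠ 0 → y ≠ 0 → x ≠ y → D x * D y = J) (hsum : ∑ x, D x = n • 1 + J) :
    circulant D * circulant (fun x => D (-x)) =
      n ^ 2 • (1 : Matrix G G S) + n • Matrix.of fun _ _ => J := by
  ext i k
  simp only [mul_apply, circulant_apply, neg_sub, Matrix.add_apply, Matrix.smul_apply, of_apply]
  obtain rfl | hik := eq_or_ne i k
  · calc ∑ j, D (i - j) * D (i - j)
      _ = ∑ x, D x * D x := (Equiv.subLeft i).sum_comp fun x => D x * D x
      _ = n • (n • 1 + J) := by simp only [hsq, ← Finset.smul_sum, hsum]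
      _ = n ^ 2 • (1 : Matrix G G S) i i + n • J := by
        rw [one_apply_eq, smul_add, smul_smul, sq]
  · rw [sum_sub_mul_sub_of_ne hzero hmul hik, hcard, Nat.add_sub_cancel, one_apply_ne hik,
      smul_zero, zero_add]

end Circulant

section TwinPrimePower

theorem transpose_permP {K : Type*} [Field K] [DecidableEq K] (β γ : K) :
    (permP β γ)ᵀ = permP (-β) γ := by
  ext a b
  have hindex : β * (-b + a) = -β * (-a + b) := by ring
  simp only [permP, transpose_apply, of_apply, hindex]

variable {F K : Type*} [Field F] [Fintype F] [DecidableEq F] [Field K]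

/-- The block of `N_β` in any position `(k, l)` with `β (l - k) = x`: the matrix `C_{ψ(x)}` if
`x ≠ 0`, and the zero matrix for `x = 0`. -/
def block (ψ : {x : K // x ≠ 0} ≃ Option F) : K → Matrix (F × F) (F × F) ℝ :=
  Function.extend Subtype.val (fun x => auxC (ψ x)) 0

variable (ψ : {x : K // x ≠ 0} ≃ Option F)

theorem block_coe (x : {x : K // x ≠ 0}) : block ψ x = auxC (ψ x) :=
  Subtype.val_injective.extend_apply _ _ x

theorem block_zero : block ψ 0 = 0 :=
  Function.extend_apply' _ _ _ fun ⟨x, hx⟩ => x.2 hx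

theorem block_apply_eq_zero_or_one (x : K) (p r : F × F) :
    block ψ x p r = 0 ∨ block ψ x p r = 1 := by
  obtain rfl | hx := eq_or_ne x 0
  · simp [block_zero]
  · rw [block_coe ψ ⟨x, hx⟩, auxC_eq_kerMatrix]
    exact kerMatrix_apply_eq_zero_or_one _ p r

theorem block_mul_self (x : K) : block ψ x * block ψ x = Fintype.card F • block ψ x := by
  obtain rfl | hx := eq_or_ne x 0
  · simp [block_zero]
  · rw [block_coe ψ ⟨x, hx⟩, auxC_mul_self]

theorem block_mul_block_of_ne {x y : K} (hx : x ≠ 0) (hy : y ≠ 0) (hxy : x ≠ y) :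
    block ψ x * block ψ y = allOnes (F × F) := by
  rw [block_coe ψ ⟨x, hx⟩, block_coe ψ ⟨y, hy⟩]
  exact auxC_mul_auxC_of_ne (ψ.injective.ne (Subtype.coe_ne_coe.mp hxy))

theorem sum_block [Fintype K] : ∑ x, block ψ x = Fintype.card F • 1 + allOnes (F × F) := by
  classical
  rw [Fintype.sum_eq_add_sum_subtype_ne _ 0, block_zero, zero_add]
  simp only [block_coe]
  rw [ψ.sum_comp auxC, sum_auxC]

variable [Fintype K] [DecidableEq K]

theorem NN_apply (β k l : K) (p r : F × F) :
    NN ψ β (k, p) (l, r) = block ψ (β * (l - k)) p r := by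
  simp only [NN, Matrix.sum_apply, kroneckerMap_apply, permP, of_apply, neg_add_eq_sub, ite_mul,
    one_mul, zero_mul]
  obtain hx | hx := eq_or_ne (β * (l - k)) 0
  · rw [hx, block_zero]
    exact Finset.sum_eq_zero fun γ _ => if_neg γ.2.symm
  · rw [block_coe ψ ⟨_, hx⟩, Fintype.sum_eq_single ⟨_, hx⟩, if_pos rfl]
    exact fun γ hγ => if_neg fun h => hγ (Subtype.ext h.symm)

theorem NN_eq_compRingEquiv_circulant (β : K) :
    NN ψ β = Matrix.compRingEquiv K (F × F) ℝ (circulant fun x => block ψ (-β * x)) := by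
  ext ⟨k, p⟩ ⟨l, r⟩
  have hindex : β * (l - k) = -β * (k - l) := by ring
  rw [NN_apply, hindex]
  rfl

theorem transpose_NN (β : K) : (NN ψ β)ᵀ = NN ψ (-β) := by
  simp only [NN, transpose_sum, ← kroneckerMap_transpose, transpose_permP, transpose_auxC]

theorem NN_mul_NN_neg (hcard : Fintype.card K = Fintype.card F + 2) {β : K} (hβ : β ≠ 0) :
    NN ψ β * NN ψ (-β) =
      (Fintype.card F : ℝ) ^ 2 • 1 + (Fintype.card F : ℝ) • allOnes (K × (F × F)) := by
  have hβ' : -β ≠ 0 := neg_ne_zero.mpr hβ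
  have hcirculant := circulant_mul_circulant_neg (D := fun x => block ψ (-β * x)) hcard
    (hzero := by rw [mul_zero, block_zero])
    (hsq := fun x => block_mul_self ψ _)
    (hmul := fun x y hx hy hxy => block_mul_block_of_ne ψ (mul_ne_zero hβ' hx)
      (mul_ne_zero hβ' hy) ((mul_right_injective₀ hβ').ne hxy))
    (hsum := (Equiv.sum_comp (Equiv.mulLeft₀ _ hβ') (block ψ)).trans (sum_block ψ))
  have hNN : NN ψ (-β) =
      Matrix.compRingEquiv K (F × F) ℝ (circulant fun x => block ψ (-β * -x)) := by
    simp only [NN_eq_compRingEquiv_circulant, neg_mul_neg, neg_neg]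
  have hallOnes : Matrix.compRingEquiv K (F × F) ℝ (Matrix.of fun _ _ => allOnes (F × F)) =
      allOnes (K × (F × F)) := rfl
  rw [NN_eq_compRingEquiv_circulant ψ β, hNN, ← map_mul, hcirculant, map_add, map_nsmul,
    map_nsmul, map_one, hallOnes, ← Nat.cast_pow, Nat.cast_smul_eq_nsmul, Nat.cast_smul_eq_nsmul]

end TwinPrimePower

/-- In the twin prime power construction, `N_β · N_{−β} = q²·I + q·J`; in particular
`N_β` is a `(0,1)`-matrix satisfying the equations of the incidence matrix of a
symmetric `2`-design with parameters `(q²(q+2), q(q+1), q)`. -/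
theorem NN_mul_neg {F K : Type*} [Field F] [Fintype F] [DecidableEq F]
    [Field K] [Fintype K] [DecidableEq K]
    (hcard : Fintype.card K = Fintype.card F + 2)
    (ψ : {x : K // x ≠ 0} ≃ Option F) (β : K) (hβ : β ≠ 0) :
    NN ψ β * NN ψ (-β) =
      (Fintype.card F : ℝ) ^ 2 • (1 : Matrix (K × (F × F)) (K × (F × F)) ℝ) +
        (Fintype.card F : ℝ) • allOnes (K × (F × F)) ∧
    (∀ p r, NN ψ β p r = 0 ∨ NN ψ β p r = 1) ∧
    NN ψ β * (NN ψ β)ᵀ =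
      ((Fintype.card F : ℝ) * ((Fintype.card F : ℝ) + 1)) •
          (1 : Matrix (K × (F × F)) (K × (F × F)) ℝ) +
        (Fintype.card F : ℝ) • (allOnes (K × (F × F)) - 1) ∧
    (NN ψ β)ᵀ * NN ψ β =
      ((Fintype.card F : ℝ) * ((Fintype.card F : ℝ) + 1)) •
          (1 : Matrix (K × (F × F)) (K × (F × F)) ℝ) +
        (Fintype.card F : ℝ) • (allOnes (K × (F × F)) - 1) := by
  have hmul := NN_mul_NN_neg ψ hcard hβ
  have hmul' := NN_mul_NN_neg ψ hcard (neg_ne_zero.mpr hβ)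
  rw [neg_neg] at hmul'
  have hdesign : (Fintype.card F : ℝ) ^ 2 • (1 : Matrix (K × (F × F)) (K × (F × F)) ℝ) +
        (Fintype.card F : ℝ) • allOnes (K × (F × F)) =
      ((Fintype.card F : ℝ) * ((Fintype.card F : ℝ) + 1)) • 1 +
        (Fintype.card F : ℝ) • (allOnes (K × (F × F)) - 1) := by
    module
  refine ⟨hmul, ?_, ?_, ?_⟩
  · rintro ⟨k, p⟩ ⟨l, r⟩
    rw [NN_apply]
    exact block_apply_eq_zero_or_one ψ _ p r
  · rw [transpose_NN, hmul, hdesign]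
  · rw [transpose_NN, hmul', hdesign]
end
end
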